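/- Let n ≥ 3 and let X be an n×n complex matrix with x_{1n} ≠ 0 and x_{n1} ≠ 0. Set υ = (x_{n2}, x_{n3}, …, x_{n,n−1}) ∈ ℂ^{n−2}, let T be the (n−2)×(n−2) lower-triangular Toeplitz matrix with T_{ab} = x_{n,1+a−b} for a ≥ b and T_{ab} = 0 for a < b, and set Υ = T · C_{[1,n−2]}, where C_{[1,n−2]} is the (n−2)×(n−1) matrix of the first n−2 rows of C. Then the (n−1)×(n−1) matrix obtained by stacking Υ on top of the row vector m equals P·Q, where P is the (n−1)×n matrix whose first row is (0,…,0,x_{n1}) and whose remaining n−2 rows form [Υ | υ] (Υ with υ appended as the last column), and Q is the n×(n−1) matrix obtained by stacking M on top of the row vector μ. -/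

import Mathlib

/-!
Write `x`, `y` for the last and the first row of `X`, continued by zero, and put
`w_k = ∑_{b ≤ k} x_{k-b} μ M^b`, so that `w_0 = x_0 μ` and `w_{k+1} = w_k M + x_{k+1} μ`.
The rows of `Υ` are `w_0, …, w_{N-1}`, hence the rows of `P Q` are `w_0, …, w_N`, and the whole
content of the theorem is the identity `w_N = m`.

With `D(a,b) = (y_a x_b - y_b x_a) / y_{N+1}`, induction on `k` gives the closed form
`(w_k)_j = ∑_{b ≤ k} D(j+1+k-b, b)` (`wVec_eq_sum_minor`). The inductive step uses that
`(v M)_j = v_{j+1} - x_0⁻¹ v_0 x_{j+1}`, that by antisymmetry of `D` the entry `(w_k)_0`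
collapses to `D(k+1, 0)`, and the three-term Plücker relation
`x_k D(j+1,0) - x_{j+1} D(k,0) = x_0 D(j+1,k)`. For `k = N` the terms with `b < j` vanish because
their first index exceeds `N+1`, and the others cancel in pairs except for `D(N+1, j) = m_j`.
-/

open Matrix

noncomputable section

/-- `det X_{1n}^{ab}`: the determinant of the `2 × 2` submatrix of `X` with rows `1, n`
(0-based: `0` and `Fin.last`) and columns `a, b`. -/
def d2 {N : ℕ} (X : Matrix (Fin (N+1)) (Fin (N+1)) ℂ) (a b : Fin (N+1)) : ℂ :=
  X 0 a * X (Fin.last N) b - X 0 b * X (Fin.last N) a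

/-- The row vector `μ = -(x_{1n} x_{n1})⁻¹ (det X_{1n}^{12}, …, det X_{1n}^{1n})`. -/
def muVec {N : ℕ} (X : Matrix (Fin (N+1)) (Fin (N+1)) ℂ) : Fin N → ℂ :=
  fun t => -(X 0 (Fin.last N) * X (Fin.last N) 0)⁻¹ * d2 X 0 t.succ

/-- The row vector `m = -x_{1n}⁻¹ (det X_{1n}^{1n}, det X_{1n}^{2n}, …, det X_{1n}^{n-1,n})`. -/
def mVec {N : ℕ} (X : Matrix (Fin (N+1)) (Fin (N+1)) ℂ) : Fin N → ℂ :=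
  fun t => -(X 0 (Fin.last N))⁻¹ * d2 X t.castSucc (Fin.last N)

/-- The matrix `M`: first row `-x_{n1}⁻¹ (x_{n2}, …, x_{nn})`, remaining rows `[I_{n-2} | 0]`. -/
def matM {N : ℕ} (X : Matrix (Fin (N+1)) (Fin (N+1)) ℂ) : Matrix (Fin N) (Fin N) ℂ :=
  Matrix.of fun i j =>
    if (i:ℕ) = 0 then -(X (Fin.last N) 0)⁻¹ * X (Fin.last N) j.succ
    else if (j:ℕ) = (i:ℕ) - 1 then 1 else 0

/-- The matrix `C` with rows `μ, μM, μM², …, μM^{n-2}`. -/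
def matC {N : ℕ} (X : Matrix (Fin (N+1)) (Fin (N+1)) ℂ) : Matrix (Fin N) (Fin N) ℂ :=
  Matrix.of fun t j => Matrix.vecMul (muVec X) (matM X ^ (t:ℕ)) j

/-- The vector `υ = (x_{n2}, …, x_{n,n-1})` of length `n-2` (paper's `n = N+2`). -/
def upsilon {N : ℕ} (X : Matrix (Fin (N+2)) (Fin (N+2)) ℂ) : Fin N → ℂ :=
  fun t => X (Fin.last (N+1)) t.succ.castSucc

/-- The lower-triangular Toeplitz matrix `T` with `T_{ab} = x_{n, 1+a-b}` for `a ≥ b`. -/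
def matT {N : ℕ} (X : Matrix (Fin (N+2)) (Fin (N+2)) ℂ) : Matrix (Fin N) (Fin N) ℂ :=
  Matrix.of fun a b =>
    if (b:ℕ) ≤ (a:ℕ) then X (Fin.last (N+1)) ⟨(a:ℕ) - (b:ℕ), by have := a.isLt; omega⟩
    else 0

/-- `Υ = T ⬝ C_{[1,n-2]}`, where `C_{[1,n-2]}` consists of the first `n-2` rows of `C`. -/
def matUps {N : ℕ} (X : Matrix (Fin (N+2)) (Fin (N+2)) ℂ) : Matrix (Fin N) (Fin (N+1)) ℂ :=
  matT X * (Matrix.of fun (a : Fin N) (j : Fin (N+1)) => matC X a.castSucc j)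

/-- The `(n-1) × (n-1)` matrix obtained by stacking `Υ` on top of the row vector `m`. -/
def stackUm {N : ℕ} (X : Matrix (Fin (N+2)) (Fin (N+2)) ℂ) :
    Matrix (Fin (N+1)) (Fin (N+1)) ℂ :=
  Matrix.of fun r c =>
    if h : (r:ℕ) < N then matUps X ⟨(r:ℕ), h⟩ c else mVec X c

/-- The `(n-1) × n` matrix `P`: first row `(0, …, 0, x_{n1})`, remaining rows `[Υ | υ]`. -/
def matP {N : ℕ} (X : Matrix (Fin (N+2)) (Fin (N+2)) ℂ) :
    Matrix (Fin (N+1)) (Fin (N+2)) ℂ :=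
  Matrix.of fun r c =>
    if h0 : (r:ℕ) = 0 then (if (c:ℕ) = N+1 then X (Fin.last (N+1)) 0 else 0)
    else if hc : (c:ℕ) < N+1 then
      matUps X ⟨(r:ℕ)-1, by have := r.isLt; omega⟩ ⟨(c:ℕ), hc⟩
    else upsilon X ⟨(r:ℕ)-1, by have := r.isLt; omega⟩

/-- The `n × (n-1)` matrix `Q` obtained by stacking `M` on top of the row vector `μ`. -/
def matQ {N : ℕ} (X : Matrix (Fin (N+2)) (Fin (N+2)) ℂ) :
    Matrix (Fin (N+2)) (Fin (N+1)) ℂ :=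
  Matrix.of fun r c =>
    if h : (r:ℕ) < N+1 then matM X ⟨(r:ℕ), h⟩ c else muVec X c

section

/-- Row `i` of `X` as a sequence on `ℕ`, continued by zero beyond the last column. -/
def rowExt {N : ℕ} (X : Matrix (Fin (N+2)) (Fin (N+2)) ℂ) (i : Fin (N+2)) (k : ℕ) : ℂ :=
  if h : k < N + 2 then X i ⟨k, h⟩ else 0

/-- The normalised minor `D(a,b) = det X_{1n}^{ab} / x_{1n}` with 0-based column indices `a, b`
ranging over `ℕ`; it vanishes when an index exceeds the last column. -/
def minor {N : ℕ} (X : Matrix (Fin (N+2)) (Fin (N+2)) ℂ) (a b : ℕ) : ℂ :=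
  (X 0 (Fin.last (N+1)))⁻¹ *
    (rowExt X 0 a * rowExt X (Fin.last (N+1)) b - rowExt X 0 b * rowExt X (Fin.last (N+1)) a)

/-- The row vector `w_k = ∑_{b ≤ k} x_{k-b} μ M^b`. -/
def wVec {N : ℕ} (X : Matrix (Fin (N+2)) (Fin (N+2)) ℂ) (k : ℕ) : Fin (N+1) → ℂ :=
  ∑ b ∈ Finset.range (k+1),
    rowExt X (Fin.last (N+1)) (k-b) • (muVec X ᵥ* (matM X ^ b))

variable {N : ℕ} (X : Matrix (Fin (N+2)) (Fin (N+2)) ℂ)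

lemma rowExt_of_lt (i : Fin (N+2)) {k : ℕ} (h : k < N + 2) : rowExt X i k = X i ⟨k, h⟩ :=
  dif_pos h

lemma rowExt_of_le (i : Fin (N+2)) {k : ℕ} (h : N + 2 ≤ k) : rowExt X i k = 0 :=
  dif_neg (by omega)

lemma minor_of_le {a : ℕ} (b : ℕ) (h : N + 2 ≤ a) : minor X a b = 0 := by
  simp [minor, rowExt_of_le X _ h]

lemma minor_antisymm (a b : ℕ) : minor X a b = -minor X b a := by
  unfold minor; ring

lemma minor_plucker (a k : ℕ) :
    rowExt X (Fin.last (N+1)) k * minor X a 0 - rowExt X (Fin.last (N+1)) a * minor X k 0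
      = rowExt X (Fin.last (N+1)) 0 * minor X a k := by
  unfold minor; ring

/-- Reversing the order of summation exchanges the two indices, so the sum is its own negative. -/
lemma sum_minor_eq_zero (j q : ℕ) :
    ∑ i ∈ Finset.range q, minor X (j + q - i) (j + i + 1) = 0 := by
  have h : ∑ i ∈ Finset.range q, minor X (j + q - i) (j + i + 1)
      = -∑ i ∈ Finset.range q, minor X (j + q - i) (j + i + 1) := by
    conv_lhs => rw [← Finset.sum_range_reflect]
    rw [← Finset.sum_neg_distrib]
    refine Finset.sum_congr rfl fun i hi => ?_
    have := Finset.mem_range.mp hi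
    rw [minor_antisymm]
    congr 2 <;> omega
  exact self_eq_neg.mp h

lemma sum_minor_one (k : ℕ) :
    ∑ b ∈ Finset.range (k+1), minor X (1 + k - b) b = minor X (k+1) 0 := by
  rw [Finset.sum_range_succ']
  have h := sum_minor_eq_zero X 0 k
  have h' : ∑ b ∈ Finset.range k, minor X (1 + k - (b+1)) (b+1) = 0 := by
    rw [← h]
    refine Finset.sum_congr rfl fun i hi => ?_
    congr 1 <;> omega
  rw [h', zero_add]
  congr 1
  omega

lemma sum_minor_last (j : ℕ) (hj : j ≤ N) :
    ∑ b ∈ Finset.range (N+1), minor X (j + 1 + N - b) b = minor X (N+1) j := by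
  have e : N + 1 = j + ((N - j) + 1) := by omega
  conv_lhs => rw [e]
  rw [Finset.sum_range_add, Finset.sum_range_succ']
  have h0 : ∑ b ∈ Finset.range j, minor X (j + 1 + N - b) b = 0 := by
    refine Finset.sum_eq_zero fun b hb => minor_of_le X b ?_
    have := Finset.mem_range.mp hb
    omega
  have h1 : ∑ i ∈ Finset.range (N - j), minor X (j + 1 + N - (j + (i+1))) (j + (i+1)) = 0 := by
    rw [← sum_minor_eq_zero X j (N - j)]
    refine Finset.sum_congr rfl fun i hi => ?_
    congr 1
    omega
  rw [h0, h1, zero_add, zero_add]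
  congr 1
  omega

lemma wVec_zero : wVec X 0 = rowExt X (Fin.last (N+1)) 0 • muVec X := by
  simp [wVec]

lemma wVec_succ (k : ℕ) :
    wVec X (k+1) = wVec X k ᵥ* matM X + rowExt X (Fin.last (N+1)) (k+1) • muVec X := by
  unfold wVec
  rw [Finset.sum_range_succ', Matrix.sum_vecMul]
  congr 1
  · refine Finset.sum_congr rfl fun b _ => ?_
    rw [Matrix.smul_vecMul, Matrix.vecMul_vecMul, ← pow_succ, Nat.add_sub_add_right]
  · simp

lemma muVec_eq (hn1 : X (Fin.last (N+1)) 0 ≠ 0) (j : Fin (N+1)) :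
    rowExt X (Fin.last (N+1)) 0 * muVec X j = minor X (j+1) 0 := by
  have h : (j:ℕ) + 1 < N + 2 := by omega
  have hs : j.succ = ⟨(j:ℕ) + 1, h⟩ := rfl
  simp only [muVec, minor, d2, rowExt_of_lt X _ h, rowExt_of_lt X _ (Nat.succ_pos (N+1)),
    Fin.mk_zero', mul_inv, hs]
  field_simp
  ring

/-- `M` acts on row vectors as a left shift plus a multiple of its first row; the sequence `f`
extends the vector `v` by a zero in position `N+1`. -/
lemma vecMul_matM (v : Fin (N+1) → ℂ) (f : ℕ → ℂ) (hf : ∀ i : Fin (N+1), v i = f i)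
    (hlast : f (N+1) = 0) (j : Fin (N+1)) :
    (v ᵥ* matM X) j
      = f (j+1) - (X (Fin.last (N+1)) 0)⁻¹ * f 0 * rowExt X (Fin.last (N+1)) (j+1) := by
  have h : (j:ℕ) + 1 < N + 2 := by omega
  have hs : j.succ = ⟨(j:ℕ) + 1, h⟩ := rfl
  have key : ∑ i : Fin N, v i.succ * matM X i.succ j = f (j+1) := by
    have : ∀ i : Fin N, v i.succ * matM X i.succ j = if (i:ℕ) = j then f (i+1) else 0 := by
      intro i
      simp [matM, hf, eq_comm]
    rw [Finset.sum_congr rfl fun i _ => this i,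
      Fin.sum_univ_eq_sum_range (fun i => if i = (j:ℕ) then f (i+1) else 0),
      Finset.sum_ite_eq' (Finset.range N) (j:ℕ) (fun i => f (i+1))]
    split_ifs with hj
    · rfl
    · have : (j:ℕ) = N := by simp at hj; omega
      rw [this, hlast]
  rw [Matrix.vecMul, dotProduct, Fin.sum_univ_succ, key, rowExt_of_lt X _ h, ← hs]
  simp only [matM, Matrix.of_apply, hf, Fin.val_zero, if_true]
  ring

lemma wVec_eq_sum_minor (hn1 : X (Fin.last (N+1)) 0 ≠ 0) (k : ℕ) (j : Fin (N+1)) :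
    wVec X k j = ∑ b ∈ Finset.range (k+1), minor X (j + 1 + k - b) b := by
  induction k generalizing j with
  | zero => simp [wVec_zero, muVec_eq X hn1]
  | succ k ih =>
    have hlast : ∑ b ∈ Finset.range (k+1), minor X (N + 1 + 1 + k - b) b = 0 := by
      refine Finset.sum_eq_zero fun b hb => minor_of_le X b ?_
      have := Finset.mem_range.mp hb
      omega
    have hx0 : rowExt X (Fin.last (N+1)) 0 = X (Fin.last (N+1)) 0 := rowExt_of_lt X _ (by omega)
    have hp := minor_plucker X (j+1) (k+1)
    rw [← muVec_eq X hn1 j, hx0] at hp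
    have hsplit : ∑ b ∈ Finset.range (k+1+1), minor X (j + 1 + (k+1) - b) b
        = ∑ b ∈ Finset.range (k+1), minor X (j + 1 + 1 + k - b) b + minor X (j+1) (k+1) := by
      rw [Finset.sum_range_succ]
      congr 1
      · refine Finset.sum_congr rfl fun b _ => ?_
        congr 1
        omega
      · congr 1
        omega
    rw [wVec_succ, Pi.add_apply, Pi.smul_apply, smul_eq_mul,
      vecMul_matM X (wVec X k) (fun i => ∑ b ∈ Finset.range (k+1), minor X (i + 1 + k - b) b)
        ih hlast j, hsplit]
    simp only [zero_add, sum_minor_one]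
    field_simp
    linear_combination hp

lemma wVec_last (hn1 : X (Fin.last (N+1)) 0 ≠ 0) :
    wVec X N = mVec X := by
  funext j
  have h : (j:ℕ) < N + 2 := by omega
  have hs : j.castSucc = ⟨(j:ℕ), h⟩ := rfl
  have hl : Fin.last (N+1) = ⟨N+1, by omega⟩ := rfl
  rw [wVec_eq_sum_minor X hn1, sum_minor_last X j (by omega)]
  simp only [minor, mVec, d2, rowExt_of_lt X _ h, rowExt_of_lt X _ (Nat.lt_succ_self (N+1)), hs,
    hl]
  ring

lemma matUps_eq_wVec (a : Fin N) : matUps X a = wVec X a := by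
  funext c
  have hle : (a:ℕ) + 1 ≤ N := a.isLt
  have hterm : ∀ b : Fin N, matT X a b * matC X b.castSucc c
      = (fun b : ℕ => if b < (a:ℕ) + 1 then
          rowExt X (Fin.last (N+1)) (a - b) * (muVec X ᵥ* (matM X ^ b)) c else 0) b := by
    intro b
    by_cases hb : (b:ℕ) ≤ a
    · have : (a:ℕ) - b < N + 2 := by omega
      simp only [matT, matC, Matrix.of_apply, if_pos hb, if_pos (Nat.lt_succ_of_le hb),
        rowExt_of_lt X _ this, Fin.val_castSucc]
    · have : ¬ (b:ℕ) < a + 1 := by omega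
      simp only [matT, Matrix.of_apply, if_neg hb, if_neg this, zero_mul]
  rw [matUps, Matrix.mul_apply]
  simp only [Matrix.of_apply]
  rw [Finset.sum_congr rfl fun b _ => hterm b, Fin.sum_univ_eq_sum_range (fun b : ℕ => if b < (a:ℕ) + 1 then
      rowExt X (Fin.last (N+1)) (a - b) * (muVec X ᵥ* (matM X ^ b)) c else 0) N,
    wVec, Finset.sum_apply, ← Finset.sum_filter]
  refine Finset.sum_congr ?_ fun b _ => rfl
  ext b
  simp only [Finset.mem_filter, Finset.mem_range]
  omega

lemma matP_mul_matQ_row (r c : Fin (N+1)) : (matP X * matQ X) r c = wVec X r c := by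
  have hM : ∀ i : Fin (N+1), matQ X i.castSucc c = matM X i c := fun i => dif_pos i.isLt
  have hmu : matQ X (Fin.last (N+1)) c = muVec X c := by simp [matQ]
  rw [Matrix.mul_apply, Fin.sum_univ_castSucc, hmu]
  simp only [hM]
  induction r using Fin.cases with
  | zero =>
    have h0 : ∀ i : Fin (N+1), matP X 0 i.castSucc = 0 := fun i => by
      simp [matP, i.isLt.ne]
    have hl : matP X 0 (Fin.last (N+1)) = X (Fin.last (N+1)) 0 := by simp [matP]
    have hx0 : rowExt X (Fin.last (N+1)) 0 = X (Fin.last (N+1)) 0 := rowExt_of_lt X _ (by omega)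
    simp [h0, hl, wVec_zero, hx0]
  | succ a =>
    have h0 : ∀ i : Fin (N+1), matP X a.succ i.castSucc = wVec X a i := fun i => by
      rw [← matUps_eq_wVec]
      simp only [matP, Matrix.of_apply, Fin.val_castSucc, i.isLt, dif_pos]
      rfl
    have h : (a:ℕ) + 1 < N + 2 := by omega
    have hl : matP X a.succ (Fin.last (N+1)) = rowExt X (Fin.last (N+1)) (a+1) := by
      rw [rowExt_of_lt X _ h]
      simp [matP, upsilon]
    simp only [h0, hl, Fin.val_succ, wVec_succ]
    rfl

end

/-- the matrix obtained by stacking `Υ` on top of `m` equals `P ⬝ Q`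
(paper's `n = N+2 ≥ 3`). -/
theorem stack_eq_PQ (N : ℕ) (hN : 1 ≤ N) (X : Matrix (Fin (N+2)) (Fin (N+2)) ℂ)
    (h1n : X 0 (Fin.last (N+1)) ≠ 0) (hn1 : X (Fin.last (N+1)) 0 ≠ 0) :
    stackUm X = matP X * matQ X := by
  ext r c
  rw [matP_mul_matQ_row]
  by_cases h : (r:ℕ) < N
  · simp [stackUm, h, matUps_eq_wVec]
  · have hr : (r:ℕ) = N := by omega
    simp [stackUm, hr, wVec_last X hn1]

end
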